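/- arXiv:2603.05662 — 2 statements merged into one kernel-verified Lean document; each statement's English description precedes it below -/
import Mathlib

section
/- Let m ≡ 2 (mod 4), m ≥ 2. Consider the cycle C_m with vertices v_1,…,v_m, and the vertex-labelling a(v_i) = (i−1)/2 for i odd, a(v_i) = m + 1 − i/2 for i even with i ≤ m/2, and a(v_i) = m − i/2 for i even with i > m/2. Let C_m* be the digraph on these vertices whose directed edges are obtained from the natural orientation of a on C_m, except that the edge between v_m and v_1 is oriented as (v_m, v_1)-reversed, i.e. from v_m to v_1 reversed relative to the natural orientation (so it is directed from the larger label to the smaller). Then a is an oriented β-valuation of C_m*: the multiset {a(head) − a(tail) mod (m+1) : directed edges of C_m*} equals Z_{m+1} ∖ {0}. -/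
/-- Theorem: let `m ≡ 2 (mod 4)` and label the cycle `C_m` (vertices `v_1,…,v_m`, with `v_i`
at index `k = i - 1`) by `a(v_i) = (i-1)/2` for `i` odd, `a(v_i) = m + 1 - i/2` for `i` even
with `i ≤ m/2`, and `a(v_i) = m - i/2` for `i` even with `i > m/2`.  Orient each edge
`{v_{k+1}, v_{k+2}}` (`0 ≤ k ≤ m-2`) towards the larger label (the natural orientation), and
orient the remaining edge `{v_m, v_1}` against the natural orientation, i.e. from `v_m` to
`v_1`.  Then `a` is an oriented β-valuation of the resulting digraph `C_m*`: `a` is injective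
with values in `{0,…,m}`, and the multiset of labels `a(head) - a(tail) (mod m+1)` over the
directed edges is `Z_{m+1} ∖ {0}`. -/
theorem cycle_two_mod_four_oriented_beta (m : ℕ) (hm : m % 4 = 2) :
    let a : ℕ → ℕ := fun k =>
      if k % 2 = 0 then k / 2
      else if k + 1 ≤ m / 2 then m + 1 - (k + 1) / 2
      else m - (k + 1) / 2
    (∀ k < m, a k ≤ m) ∧
    (∀ j < m, ∀ k < m, a j = a k → j = k) ∧
    ((Finset.range (m - 1)).val.map (fun k =>
        if a k < a (k + 1) then ((a (k + 1) : ZMod (m + 1)) - (a k : ZMod (m + 1)))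
        else ((a k : ZMod (m + 1)) - (a (k + 1) : ZMod (m + 1))))
      + {((a 0 : ZMod (m + 1)) - (a (m - 1) : ZMod (m + 1)))}
      = (Finset.univ \ {0} : Finset (ZMod (m + 1))).val) := by
  intro a
  have ha : ∀ k, a k = if k % 2 = 0 then k / 2
      else if k + 1 ≤ m / 2 then m + 1 - (k + 1) / 2
      else m - (k + 1) / 2 := fun _ => rfl
  refine ⟨?_, ?_, ?_⟩
  · intro k hk
    rw [ha]
    split_ifs <;> omega
  · intro j hj k hk h
    rw [ha, ha] at h
    split_ifs at h <;> omega
  · clear_value a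
    obtain ⟨e, he⟩ : ∃ e : ℕ → ℕ, ∀ k, e k = if k = m - 1 then m / 2 + 1
        else if 2 * k + 2 < m then m - k else m - 1 - k := ⟨_, fun _ => rfl⟩
    have h1 : ∀ k ∈ Multiset.range (m - 1),
        (if a k < a (k + 1) then ((a (k + 1) : ZMod (m + 1)) - (a k : ZMod (m + 1)))
        else ((a k : ZMod (m + 1)) - (a (k + 1) : ZMod (m + 1)))) = ((e k : ℕ) : ZMod (m + 1)) := by
      intro k hk
      rw [Multiset.mem_range] at hk
      have hA := ha k
      have hB := ha (k + 1)
      have hE := he k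
      split_ifs with hlt
      · rw [← Nat.cast_sub hlt.le]
        congr 1
        split_ifs at hA hB hE <;> omega
      · rw [← Nat.cast_sub (not_lt.mp hlt)]
        congr 1
        split_ifs at hA hB hE <;> omega
    have h2 : ((a 0 : ZMod (m + 1)) - (a (m - 1) : ZMod (m + 1)))
        = ((e (m - 1) : ℕ) : ZMod (m + 1)) := by
      have hA : a 0 = 0 := by rw [ha]; simp
      have hB : a (m - 1) = m / 2 := by
        rw [ha]; split_ifs <;> omega
      have hE : e (m - 1) = m / 2 + 1 := by rw [he]; simp
      rw [hA, hB, hE, sub_eq_iff_eq_add, ← Nat.cast_add,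
        show m / 2 + 1 + m / 2 = m + 1 by omega, ZMod.natCast_self, Nat.cast_zero]
    have h3 : (Finset.range (m - 1)).val.map (fun k =>
        if a k < a (k + 1) then ((a (k + 1) : ZMod (m + 1)) - (a k : ZMod (m + 1)))
        else ((a k : ZMod (m + 1)) - (a (k + 1) : ZMod (m + 1))))
        = (Multiset.range (m - 1)).map (fun k => ((e k : ℕ) : ZMod (m + 1))) :=
      Multiset.map_congr rfl h1
    have h4 : Multiset.range m = (m - 1) ::ₘ Multiset.range (m - 1) := by
      rw [← Multiset.range_succ]; congr 1; omega
    rw [h3, h2, add_comm (Multiset.map _ _), Multiset.singleton_add,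
      ← Multiset.map_cons (fun k => ((e k : ℕ) : ZMod (m + 1))), ← h4]
    have hlo : ∀ k < m, 1 ≤ e k ∧ e k ≤ m := by
      intro k hk
      have hE := he k
      split_ifs at hE <;> omega
    have hval : ∀ x y : ℕ, x ≤ m → y ≤ m → (x : ZMod (m + 1)) = y → x = y := by
      intro x y hx hy h
      rw [ZMod.natCast_eq_natCast_iff'] at h
      rwa [Nat.mod_eq_of_lt (by omega), Nat.mod_eq_of_lt (by omega)] at h
    rw [Multiset.Nodup.ext _ (Finset.nodup _)]
    · intro x
      simp only [Multiset.mem_map, Multiset.mem_range, Finset.mem_val, Finset.mem_sdiff,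
        Finset.mem_univ, true_and, Finset.mem_singleton]
      constructor
      · rintro ⟨k, hk, rfl⟩ h0
        have := hval (e k) 0 (hlo k hk).2 (by omega) (by simpa using h0)
        have := hlo k hk
        omega
      · intro hx
        have hv : x.val ≠ 0 := fun h => hx ((ZMod.val_eq_zero x).mp h)
        have hv2 : x.val < m + 1 := ZMod.val_lt x
        suffices h : ∃ k, k < m ∧ e k = x.val by
          obtain ⟨k, hk, hek⟩ := h
          exact ⟨k, hk, by rw [hek, ZMod.natCast_zmod_val]⟩
        generalize x.val = v at hv hv2
        rcases lt_trichotomy v (m / 2 + 1) with h | h | h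
        · refine ⟨m - 1 - v, by omega, ?_⟩
          have hE := he (m - 1 - v)
          split_ifs at hE <;> omega
        · refine ⟨m - 1, by omega, ?_⟩
          rw [he, if_pos rfl, h]
        · refine ⟨m - v, by omega, ?_⟩
          have hE := he (m - v)
          split_ifs at hE <;> omega
    · refine Multiset.Nodup.map_on ?_ (Multiset.nodup_range m)
      intro j hj k hk h
      rw [Multiset.mem_range] at hj hk
      have h' := hval _ _ (hlo j hj).2 (hlo k hk).2 h
      rw [he, he] at h'
      split_ifs at h' <;> omega
end

section
/- For all integers k ≥ 1 and l ≥ 1, there exists a (4kl² + 1, 4k, l, 1)-2-CEDF in Z_{4kl²+1}: that is, a family of 4k pairwise disjoint l-subsets A_0, A_1, …, A_{4k−1} of Z_{4kl²+1} such that the multiset union ⋃_{i=0}^{4k−1} Δ(A_{i+2 mod 4k}, A_i) equals Z_{4kl²+1} ∖ {0}. -/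
/-- The multiset of external differences `a - b` for `a ∈ A`, `b ∈ B`. -/
def EDFdelta {G : Type*} [AddGroup G] (A B : Finset G) : Multiset G :=
  (A ×ˢ B).val.map fun p => p.1 - p.2

/-- Block labels of the sets: indices `≡ 0, 2 (mod 4)` form the first cycle, indices
`≡ 1, 3 (mod 4)` the second one. -/
def cedfLab (k j : ℕ) : ℕ :=
  if j % 4 = 0 then j / 4
  else if j % 4 = 2 then (if j / 4 < k / 2 then 4 * k - j / 4 else 4 * k - 1 - j / 4)
  else if j % 4 = 1 then k + 1 - k % 2 + j / 4
  else if j / 4 + 1 < k / 2 then 3 * k - 1 - k % 2 - j / 4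
  else if j / 4 + 1 = k / 2 then 4 * k - k / 2
  else 3 * k - k % 2 - j / 4

/-- Natural number representing the `q`-th element of the `j`-th set. -/
def cedfVal (k l j q : ℕ) : ℕ :=
  if j % 4 < 2 then l ^ 2 * cedfLab k j + q else l ^ 2 * (cedfLab k j - 1) + l * (q + 1)

theorem cedfLab_small (k j : ℕ) (hj : j < 4 * k) (h : j % 4 < 2) :
    cedfLab k j ≤ 2 * k - k % 2 := by
  unfold cedfLab
  split_ifs <;> omega

theorem cedfLab_big (k j : ℕ) (hj : j < 4 * k) (h : ¬ j % 4 < 2) :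
    2 * k - k % 2 < cedfLab k j ∧ cedfLab k j ≤ 4 * k := by
  unfold cedfLab
  split_ifs <;> omega

theorem cedfLab_inj (k i j : ℕ) (hi : i < 4 * k) (hj : j < 4 * k)
    (h : cedfLab k i = cedfLab k j) : i = j := by
  unfold cedfLab at h
  have h1 := Nat.div_add_mod i 4
  have h2 := Nat.div_add_mod j 4
  have h3 := Nat.mod_lt i (show 0 < 4 by norm_num)
  have h4 := Nat.mod_lt j (show 0 < 4 by norm_num)
  have h5 := Nat.div_add_mod k 2
  have h6 := Nat.mod_lt k (show 0 < 2 by norm_num)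
  generalize i / 4 = a at *
  generalize i % 4 = b at *
  generalize j / 4 = c at *
  generalize j % 4 = d at *
  generalize k / 2 = x at *
  generalize k % 2 = y at *
  split_ifs at h <;> omega

theorem cedfLab_edge (k d : ℕ) (h1 : 1 ≤ d) (h2 : d ≤ 4 * k) :
    ∃ j < 4 * k, (j % 4 < 2 ∧ cedfLab k ((j + 2) % (4 * k)) = cedfLab k j + d) ∨
      (¬ j % 4 < 2 ∧ cedfLab k j + d = cedfLab k ((j + 2) % (4 * k)) + (4 * k + 1)) := by
  have up : ∀ i r, r < 2 → i < k → cedfLab k (4 * i + r + 2) = cedfLab k (4 * i + r) + d →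
      ∃ j < 4 * k, (j % 4 < 2 ∧ cedfLab k ((j + 2) % (4 * k)) = cedfLab k j + d) ∨
      (¬ j % 4 < 2 ∧ cedfLab k j + d = cedfLab k ((j + 2) % (4 * k)) + (4 * k + 1)) := by
    intro i r hr hi h
    refine ⟨4 * i + r, by omega, Or.inl ⟨by omega, ?_⟩⟩
    rw [Nat.mod_eq_of_lt (by omega)]
    exact h
  have dn : ∀ i r, r < 2 → i + 1 < k →
      cedfLab k (4 * i + 2 + r) + d = cedfLab k (4 * (i + 1) + r) + (4 * k + 1) →
      ∃ j < 4 * k, (j % 4 < 2 ∧ cedfLab k ((j + 2) % (4 * k)) = cedfLab k j + d) ∨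
      (¬ j % 4 < 2 ∧ cedfLab k j + d = cedfLab k ((j + 2) % (4 * k)) + (4 * k + 1)) := by
    intro i r hr hi h
    refine ⟨4 * i + 2 + r, by omega, Or.inr ⟨by omega, ?_⟩⟩
    rw [Nat.mod_eq_of_lt (by omega), show 4 * i + 2 + r + 2 = 4 * (i + 1) + r by ring]
    exact h
  have cl : ∀ r, r < 2 →
      cedfLab k (4 * (k - 1) + 2 + r) + d = cedfLab k r + (4 * k + 1) →
      ∃ j < 4 * k, (j % 4 < 2 ∧ cedfLab k ((j + 2) % (4 * k)) = cedfLab k j + d) ∨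
      (¬ j % 4 < 2 ∧ cedfLab k j + d = cedfLab k ((j + 2) % (4 * k)) + (4 * k + 1)) := by
    intro r hr h
    refine ⟨4 * (k - 1) + 2 + r, by omega, Or.inr ⟨by omega, ?_⟩⟩
    rw [show 4 * (k - 1) + 2 + r + 2 = r + 4 * k by omega, Nat.add_mod_right,
      Nat.mod_eq_of_lt (by omega : r < 4 * k)]
    exact h
  have l0 : ∀ i, cedfLab k (4 * i + 0) = i := by
    intro i; unfold cedfLab; split_ifs <;> omega
  have l1 : ∀ i, cedfLab k (4 * i + 1) = k + 1 - k % 2 + i := by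
    intro i; unfold cedfLab; split_ifs <;> omega
  have e2 : ∀ i, (4 * i + 2) / 4 = i := by intro i; omega
  have e3 : ∀ i, (4 * i + 3) / 4 = i := by intro i; omega
  have e2' : ∀ i, (4 * i + 2) % 4 = 2 := by intro i; omega
  have e3' : ∀ i, (4 * i + 3) % 4 = 3 := by intro i; omega
  have l2 : ∀ i, cedfLab k (4 * i + 2) =
      if i < k / 2 then 4 * k - i else 4 * k - 1 - i := by
    intro i; simp [cedfLab, e2, e2']
  have l3 : ∀ i, cedfLab k (4 * i + 3) =
      if i + 1 < k / 2 then 3 * k - 1 - k % 2 - i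
      else if i + 1 = k / 2 then 4 * k - k / 2
      else 3 * k - k % 2 - i := by
    intro i; simp [cedfLab, e3, e3']
  have up0 := fun i hi h => up i 0 (by norm_num) hi h
  have up1 := fun i hi h => up i 1 (by norm_num) hi h
  have dn0 := fun i hi h => dn i 0 (by norm_num) hi h
  have dn1 := fun i hi h => dn i 1 (by norm_num) hi h
  have cl0 := cl 0 (by norm_num)
  have cl1 := cl 1 (by norm_num)
  have z0 : cedfLab k 0 = 0 := l0 0
  have z1 : cedfLab k 1 = k + 1 - k % 2 + 0 := l1 0
  simp only [Nat.add_assoc, Nat.reduceAdd] at up0 up1 dn0 dn1 cl0 cl1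
  simp only [Nat.add_zero] at up0 dn0 l0
  simp only [l0, l1, l2, l3, z0, z1] at up0 up1 dn0 dn1 cl0 cl1
  clear up dn cl l0 l1 l2 l3 z0 z1 e2 e3 e2' e3'
  generalize (∃ j < 4 * k, (j % 4 < 2 ∧ cedfLab k ((j + 2) % (4 * k)) = cedfLab k j + d) ∨
      (¬ j % 4 < 2 ∧ cedfLab k j + d = cedfLab k ((j + 2) % (4 * k)) + (4 * k + 1))) = P at *
  obtain ⟨h, hh⟩ : ∃ h, h = k / 2 := ⟨_, rfl⟩
  by_cases c1 : d = k + 1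
  · apply cl0; split_ifs <;> omega
  by_cases c2 : d = 3 * k + 1
  · apply cl1; split_ifs <;> omega
  by_cases c3 : 1 ≤ h ∧ d = 2 * k + 2 * (k % 2)
  · apply up1 (h - 1) (by omega); split_ifs <;> omega
  by_cases c4 : 1 ≤ h ∧ 2 ≤ k ∧ d = 2 * k + 2 - 2 * (k % 2)
  · apply dn1 (h - 1) (by omega); split_ifs <;> omega
  rcases Nat.even_or_odd' d with ⟨c, hc | hc⟩
  · by_cases a1 : c ≤ h
    · apply dn0 (c - 1) (by omega); split_ifs <;> omega
    by_cases a2 : 2 * k < c + h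
    · apply up0 (2 * k - c) (by omega); split_ifs <;> omega
    by_cases a3 : c < k
    · apply up1 (k - 1 - c) (by omega); split_ifs <;> omega
    · apply dn1 (c - k - 2) (by omega); split_ifs <;> omega
  · by_cases a1 : k ≤ c ∧ c + h < 2 * k
    · apply up0 (2 * k - 1 - c) (by omega); split_ifs <;> omega
    by_cases a2 : h < c ∧ c < k
    · apply dn0 (c - 1) (by omega); split_ifs <;> omega
    by_cases a3 : c < k
    · apply up1 (k - 1 - c) (by omega); split_ifs <;> omega
    · apply dn1 (c - k - 1) (by omega); split_ifs <;> omega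

theorem cedfVal_lt (k l j q : ℕ) (hj : j < 4 * k) (hq : q < l) :
    cedfVal k l j q < 4 * k * l ^ 2 + 1 := by
  unfold cedfVal
  split_ifs with h
  · have h1 := cedfLab_small k j hj h
    have h2 : cedfLab k j + 1 ≤ 4 * k := by omega
    have h3 := Nat.mul_le_mul_left (l ^ 2) h2
    nlinarith
  · have h1 := cedfLab_big k j hj h
    obtain ⟨y, hy⟩ : ∃ y, cedfLab k j = y + 1 := ⟨cedfLab k j - 1, by omega⟩
    rw [hy, Nat.add_sub_cancel]
    have h2 : y + 1 ≤ 4 * k := by omega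
    have h3 := Nat.mul_le_mul_left (l ^ 2) h2
    have h4 : l * (q + 1) ≤ l * l := Nat.mul_le_mul_left _ hq
    nlinarith

/-- Uniqueness of division with remainder. -/
theorem cedf_divmod (m a b r s : ℕ) (hr : r < m) (hs : s < m) (h : m * a + r = m * b + s) :
    a = b ∧ r = s := by
  have h1 : a = b := by
    have := congrArg (· / m) h
    simpa [Nat.mul_add_div (by omega : 0 < m), Nat.div_eq_of_lt hr, Nat.div_eq_of_lt hs] using this
  subst h1
  exact ⟨rfl, by omega⟩

theorem cedfVal_cross (k l i j q r : ℕ) (hi : i < 4 * k) (hj : j < 4 * k)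
    (hq : q < l) (h1 : i % 4 < 2) (h2 : ¬ j % 4 < 2) :
    cedfVal k l i q < cedfVal k l j r := by
  unfold cedfVal
  rw [if_pos h1, if_neg h2]
  have h3 := cedfLab_small k i hi h1
  have h4 := cedfLab_big k j hj h2
  have h5 : cedfLab k i ≤ cedfLab k j - 1 := by omega
  have h6 := Nat.mul_le_mul_left (l ^ 2) h5
  nlinarith

theorem cedfVal_inj (k l i j q r : ℕ) (hi : i < 4 * k) (hj : j < 4 * k)
    (hq : q < l) (hr : r < l) (h : cedfVal k l i q = cedfVal k l j r) : i = j ∧ q = r := by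
  by_cases h1 : i % 4 < 2 <;> by_cases h2 : j % 4 < 2
  · unfold cedfVal at h
    rw [if_pos h1, if_pos h2] at h
    have := cedf_divmod (l ^ 2) _ _ _ _ (by nlinarith) (by nlinarith) h
    exact ⟨cedfLab_inj k i j hi hj this.1, this.2⟩
  · have := cedfVal_cross k l i j q r hi hj hq h1 h2
    omega
  · have := cedfVal_cross k l j i r q hj hi hr h2 h1
    omega
  · unfold cedfVal at h
    rw [if_neg h1, if_neg h2] at h
    have e1 := cedfLab_big k i hi h1
    have e2 := cedfLab_big k j hj h2
    have h' : l * (l * (cedfLab k i - 1) + q) = l * (l * (cedfLab k j - 1) + r) := by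
      nlinarith
    have h'' := Nat.eq_of_mul_eq_mul_left (by omega) h'
    have := cedf_divmod l _ _ _ _ hq hr h''
    exact ⟨cedfLab_inj k i j hi hj (by omega), this.2⟩

/-- Every element of `[1, l²]` is `l * (q + 1) - r`. -/
theorem cedf_rem (l t : ℕ) (ht : t < l ^ 2) :
    ∃ q < l, ∃ r < l, t + 1 + r = l * (q + 1) := by
  have hl : 0 < l := by
    rcases Nat.eq_zero_or_pos l with h | h
    · subst h; simp at ht
    · exact h
  refine ⟨t / l, Nat.div_lt_of_lt_mul (by nlinarith), l - 1 - t % l, by omega, ?_⟩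
  have h1 := Nat.div_add_mod t l
  have h2 := Nat.mod_lt t hl
  rw [Nat.mul_add]
  omega

/-- Every nonzero residue is a difference. -/
theorem cedf_surj (k l z : ℕ) (hk : 1 ≤ k) (hl : 1 ≤ l) (h1 : 1 ≤ z) (h2 : z ≤ 4 * k * l ^ 2) :
    ∃ j < 4 * k, ∃ q < l, ∃ r < l,
      ((cedfVal k l ((j + 2) % (4 * k)) q : ℤ) - cedfVal k l j r = z ∨
       (cedfVal k l ((j + 2) % (4 * k)) q : ℤ) - cedfVal k l j r =
         (z : ℤ) - (4 * k * l ^ 2 + 1 : ℕ)) := by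
  have hl2 : 0 < l ^ 2 := by positivity
  have e1 := Nat.div_add_mod (z - 1) (l ^ 2)
  have e2 := Nat.mod_lt (z - 1) hl2
  have e3 : (z - 1) / l ^ 2 < 4 * k := Nat.div_lt_of_lt_mul (by nlinarith [Nat.sub_lt h1 one_pos])
  obtain ⟨j, hj, hh⟩ := cedfLab_edge k ((z - 1) / l ^ 2 + 1) (Nat.le_add_left _ _) e3
  generalize (z - 1) / l ^ 2 = D at *
  generalize (z - 1) % l ^ 2 = t at *
  have hz : z = l ^ 2 * D + t + 1 := by omega
  have hj' : (j + 2) % (4 * k) < 4 * k := Nat.mod_lt _ (by omega)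
  have h4 : (j + 2) % (4 * k) % 4 = (j + 2) % 4 := Nat.mod_mul_right_mod _ _ _
  rcases hh with ⟨ht, hh⟩ | ⟨ht, hh⟩
  · obtain ⟨q, hq, r, hr, hqr⟩ := cedf_rem l t e2
    refine ⟨j, hj, q, hq, r, hr, Or.inl ?_⟩
    have ht' : ¬ (j + 2) % (4 * k) % 4 < 2 := by omega
    unfold cedfVal
    rw [if_pos ht, if_neg ht', hh, hz, ← Nat.add_assoc, Nat.add_sub_cancel]
    zify at hqr
    push_cast
    linear_combination -hqr
  · obtain ⟨q, hq, r, hr, hqr⟩ := cedf_rem l (l ^ 2 - 1 - t) (by omega)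
    refine ⟨j, hj, r, hr, q, hq, Or.inr ?_⟩
    have ht' : (j + 2) % (4 * k) % 4 < 2 := by omega
    have hb := cedfLab_big k j hj ht
    obtain ⟨y, hy⟩ : ∃ y, cedfLab k j = y + 1 := ⟨cedfLab k j - 1, by omega⟩
    unfold cedfVal
    rw [if_neg ht, if_pos ht', hz, hy, Nat.add_sub_cancel]
    rw [hy] at hh
    have hqr' : l ^ 2 + r = l * (q + 1) + t := by omega
    zify at hqr' hh
    push_cast
    linear_combination (l : ℤ) ^ 2 * (-hh) + hqr'

/-- Theorem: for all `k, l ≥ 1` there exists a `(4kl² + 1, 4k, l, 1)`-`2`-CEDF in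
`Z_{4kl²+1}`: a family of `4k` pairwise disjoint `l`-subsets `A_0, …, A_{4k-1}` of
`Z_{4kl²+1}` such that the multiset union `⋃_{i=0}^{4k-1} Δ(A_{(i+2) mod 4k}, A_i)` equals
`Z_{4kl²+1} ∖ {0}`. -/
theorem two_CEDF_exists (k l : ℕ) (hk : 1 ≤ k) (hl : 1 ≤ l) :
    ∃ A : ℕ → Finset (ZMod (4 * k * l ^ 2 + 1)),
      (∀ i < 4 * k, (A i).card = l) ∧
      (∀ i < 4 * k, ∀ j < 4 * k, i ≠ j → Disjoint (A i) (A j)) ∧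
      ((Finset.range (4 * k)).val.bind fun i => EDFdelta (A ((i + 2) % (4 * k))) (A i))
        = (Finset.univ \ {0} : Finset (ZMod (4 * k * l ^ 2 + 1))).val := by
  have key : ∀ i < 4 * k, ∀ j < 4 * k, ∀ q < l, ∀ r < l,
      ((cedfVal k l i q : ℕ) : ZMod (4 * k * l ^ 2 + 1)) = (cedfVal k l j r : ℕ) →
      i = j ∧ q = r := by
    intro i hi j hj q hq r hr h
    rw [ZMod.natCast_eq_natCast_iff', Nat.mod_eq_of_lt (cedfVal_lt k l i q hi hq),
      Nat.mod_eq_of_lt (cedfVal_lt k l j r hj hr)] at h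
    exact cedfVal_inj k l i j q r hi hj hq hr h
  obtain ⟨A, hA⟩ : ∃ A : ℕ → Finset (ZMod (4 * k * l ^ 2 + 1)), ∀ i, A i =
      (Finset.range l).image fun q => ((cedfVal k l i q : ℕ) : ZMod (4 * k * l ^ 2 + 1)) :=
    ⟨_, fun _ => rfl⟩
  have hcard : ∀ i < 4 * k, (A i).card = l := by
    intro i hi
    rw [hA, Finset.card_image_of_injOn, Finset.card_range]
    intro q hq r hr h
    simp only [Finset.coe_range, Set.mem_Iio] at hq hr
    exact (key i hi i hi q hq r hr h).2
  refine ⟨A, hcard, ?_, ?_⟩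
  · intro i hi j hj hij
    rw [Finset.disjoint_left]
    intro x hx hy
    simp only [hA, Finset.mem_image, Finset.mem_range] at hx hy
    obtain ⟨q, hq, rfl⟩ := hx
    obtain ⟨r, hr, h⟩ := hy
    exact hij (key j hj i hi r hr q hq h).1.symm
  · symm
    apply Multiset.eq_of_le_of_card_le
    · rw [Multiset.le_iff_subset (Finset.nodup _)]
      intro z hz
      have hz0 : z ≠ 0 := by
        rw [Finset.mem_val] at hz
        simpa using hz
      have hv1 : 1 ≤ z.val := Nat.one_le_iff_ne_zero.mpr (by simpa [ZMod.val_eq_zero] using hz0)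
      have hv2 : z.val ≤ 4 * k * l ^ 2 := Nat.lt_succ_iff.mp (ZMod.val_lt z)
      obtain ⟨j, hj, q, hq, r, hr, h⟩ := cedf_surj k l z.val hk hl hv1 hv2
      rw [Multiset.mem_bind]
      refine ⟨j, by simpa using hj, ?_⟩
      unfold EDFdelta
      rw [Multiset.mem_map]
      refine ⟨((cedfVal k l ((j + 2) % (4 * k)) q : ℕ), (cedfVal k l j r : ℕ)), ?_, ?_⟩
      · rw [Finset.mem_val, Finset.mem_product, hA, hA]
        exact ⟨Finset.mem_image_of_mem _ (by simpa using hq),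
          Finset.mem_image_of_mem _ (by simpa using hr)⟩
      · have hzv : ((z.val : ℕ) : ZMod (4 * k * l ^ 2 + 1)) = z := ZMod.natCast_zmod_val z
        rcases h with h | h
        · have := congrArg (Int.cast : ℤ → ZMod (4 * k * l ^ 2 + 1)) h
          rw [Int.cast_sub, Int.cast_natCast, Int.cast_natCast, Int.cast_natCast, hzv] at this
          exact this
        · have := congrArg (Int.cast : ℤ → ZMod (4 * k * l ^ 2 + 1)) h
          rw [Int.cast_sub, Int.cast_sub, Int.cast_natCast, Int.cast_natCast, Int.cast_natCast,
            Int.cast_natCast, hzv, ZMod.natCast_self, sub_zero] at this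
          exact this
    · rw [Multiset.card_bind]
      have h1 : ∀ i ∈ (Finset.range (4 * k)).val,
          (Multiset.card ∘ fun i => EDFdelta (A ((i + 2) % (4 * k))) (A i)) i = l ^ 2 := by
        intro i hi
        have hi' : i < 4 * k := by simpa using hi
        simp only [Function.comp, EDFdelta, Multiset.card_map, Finset.card_val,
          Finset.card_product]
        rw [hcard i hi', hcard _ (Nat.mod_lt _ (by omega)), sq]
      rw [Multiset.map_congr rfl h1, Multiset.map_const', Multiset.sum_replicate]
      simp only [Finset.card_val, Finset.card_range, smul_eq_mul]
      rw [Finset.card_sdiff_of_subset (Finset.subset_univ _), Finset.card_univ, ZMod.card]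
      simp
end
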